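/- Let F be a field with char(F) ≠ 2, let n ≥ 2, and let T : M_n(F) → M_n(F) be a bijective linear map. Then T(D_n) ⊆ D_n if and only if there exist invertible matrices P, Q ∈ M_n(F) with det(PQ) ∈ {−1, 1} such that either T(X) = P·X·Q for all X ∈ M_n(F), or T(X) = P·Xᵗ·Q for all X ∈ M_n(F). -/

import Mathlib

open Matrix

/-- The set of matrices that are products of four involutions. -/
def ProdInv4 (F : Type*) [Field F] (n : ℕ) : Set (Matrix (Fin n) (Fin n) F) :=
  {A | ∃ J₁ J₂ J₃ J₄ : Matrix (Fin n) (Fin n) F,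
    J₁ * J₁ = 1 ∧ J₂ * J₂ = 1 ∧ J₃ * J₃ = 1 ∧ J₄ * J₄ = 1 ∧ A = J₁ * J₂ * J₃ * J₄}

theorem exists_good_retraction {F V : Type*} [Field F] [AddCommGroup V] [Module F V]
    (W K : Submodule F V) :
    ∃ q : V →ₗ[F] W, (∀ w : W, q w = w) ∧ ∀ k ∈ K, (q k : V) ∈ K := by
  obtain ⟨C, hC⟩ := Submodule.exists_isCompl (W ⊓ K)
  have hd : Disjoint (K ⊓ C) W := by
    rw [Submodule.disjoint_def]
    intro x hx hw
    exact (Submodule.disjoint_def.1 hC.disjoint) x ⟨hw, hx.1⟩ hx.2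
  obtain ⟨Z, hZ, hWZ⟩ := hd.exists_isCompl
  obtain ⟨q, hq⟩ : ∃ q : V →ₗ[F] W, (∀ w : W, q w = w) ∧ ∀ z ∈ Z, q z = 0 := by
    refine ⟨W.projectionOnto Z hWZ.symm, fun w => ?_, fun z hz => ?_⟩
    · simp
    · simpa using hz
  refine ⟨q, hq.1, fun k hk => ?_⟩
  have : k ∈ (W ⊓ K) ⊔ C := by rw [hC.sup_eq_top]; trivial
  obtain ⟨a, ha, b, hb, rfl⟩ := Submodule.mem_sup.1 this
  have hbK : b ∈ K := by
    have := K.sub_mem hk ha.2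
    simpa using this
  have h1 : q b = 0 := hq.2 b (hZ ⟨hbK, hb⟩)
  have h2 := hq.1 ⟨a, ha.1⟩
  simp only at h2
  rw [map_add, h1, h2]
  simpa using ha.2

theorem nilp_anti {F : Type*} [Field F] (h2 : (2 : F) ≠ 0) (k : ℕ) :
    ∀ {V : Type*} [AddCommGroup V] [Module F V] (M : Module.End F V), M ^ k = 0 →
      ∃ J : Module.End F V, (∀ x, J (J x) = x) ∧ ∀ x, J (M x) = - M (J x) := by
  induction k with
  | zero =>
    intro V _ _ M hM
    have h0 : ∀ x : V, x = 0 := fun x => by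
      have := congrArg (fun f : Module.End F V => f x) hM
      simpa using this
    exact ⟨1, fun x => by simp, fun x => by rw [h0 (M x), h0 x]; simp⟩
  | succ k ih =>
    intro V _ _ M hM
    set W := LinearMap.range M with hW
    have hMW : ∀ x, M x ∈ W := fun x => ⟨x, rfl⟩
    let M' : Module.End F W := (M.comp W.subtype).codRestrict W (fun x => hMW _)
    have hM'c : ∀ w : W, ((M' w : W) : V) = M w := fun w => rfl
    have hM'pow : ∀ j (w : W), (((M' ^ j) w : W) : V) = (M ^ j) w := by
      intro j
      induction j with
      | zero => intro w; simp
      | succ j ihj => intro w; rw [pow_succ, pow_succ, Module.End.mul_apply, Module.End.mul_apply, ihj, hM'c]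
    have hM' : M' ^ k = 0 := by
      ext w
      rw [hM'pow]
      obtain ⟨x, hx⟩ := w.2
      rw [← hx, ← Module.End.mul_apply, ← pow_succ, hM]; simp
    obtain ⟨J, hJ, hJM⟩ := ih M' hM'
    obtain ⟨q, hq, hqK⟩ := exists_good_retraction W (LinearMap.ker M)
    let Mr : V →ₗ[F] W := M.codRestrict W hMW
    have hMr : ∀ x, ((Mr x : W) : V) = M x := fun x => rfl
    obtain ⟨s, hs⟩ := LinearMap.exists_rightInverse_of_surjective Mr
      (by rw [LinearMap.range_eq_top]; rintro ⟨w, x, hx⟩; exact ⟨x, Subtype.ext hx⟩)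
    have hs' : ∀ w : W, M (s w) = w := fun w => by
      rw [← hMr]; exact congrArg (fun f : W →ₗ[F] W => ((f w : W) : V)) hs
    let g : Module.End F V := LinearMap.id - s ∘ₗ Mr - s ∘ₗ J ∘ₗ Mr
    have hg : ∀ x, g x = x - s (Mr x) - s (J (Mr x)) := fun x => rfl
    let J1 : Module.End F V := W.subtype ∘ₗ J ∘ₗ q + g ∘ₗ (LinearMap.id - W.subtype ∘ₗ q)
    have hJ1 : ∀ x, J1 x = (J (q x) : V) + g (x - q x) := fun x => rfl
    have hJMc : ∀ w : W, M (J w : V) = - (J (M' w) : V) := by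
      intro w
      rw [← hM'c, hJM]; simp
    have hMq : ∀ w : W, Mr (w : V) = M' w := fun w => rfl
    have hJ1W : ∀ w : W, J1 (w : V) = (J w : V) := by
      intro w; rw [hJ1, hq]; simp
    have hMJ1 : ∀ x, M (J1 x) = - (J (Mr x) : V) := by
      intro x
      rw [hJ1, hg]
      simp only [map_add, map_sub, hs', hJMc, hMr, hMq, hM'c]
      abel
    have hMrK : ∀ x, M x = 0 → Mr x = 0 := fun x hx => Subtype.ext hx
    have hK : ∀ x, M x = 0 → J1 (J1 x) = x := by
      intro x hx
      have hqx : M (q x : V) = 0 := hqK x hx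
      have hgk : ∀ y, M y = 0 → g y = y := by
        intro y hy; rw [hg, hMrK y hy]; simp
      have h1 : J1 x = (J (q x) : V) + (x - q x) := by
        rw [hJ1, hgk]; rw [map_sub, hx, hqx, sub_zero]
      have h3 : q (x - q x) = 0 := by rw [map_sub, hq, sub_self]
      have h4 : J1 (x - q x) = x - q x := by
        rw [hJ1, h3, hgk]
        · simp
        · simp [hx, hqx]
      rw [h1, map_add, hJ1W, h4, hJ]; abel
    let E : Module.End F V := J1 ∘ₗ J1 - LinearMap.id
    have hE : ∀ x, E x = J1 (J1 x) - x := fun x => rfl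
    have hEK : ∀ x, M x = 0 → E x = 0 := fun x hx => by rw [hE, hK x hx, sub_self]
    have hEW : ∀ w : W, E w = 0 := fun w => by rw [hE, hJ1W, hJ1W, hJ, sub_self]
    have hMrJ1 : ∀ x, Mr (J1 x) = - J (Mr x) := fun x => Subtype.ext (by rw [hMr, hMJ1]; simp)
    have hME : ∀ x, M (E x) = 0 := by
      intro x
      rw [hE, map_sub, hMJ1, hMrJ1]; simp [hJ, hMr]
    have hEE : ∀ x, E (E x) = 0 := fun x => hEK _ (hME x)
    have hJE : ∀ x, J1 (E x) = E (J1 x) := fun x => by simp [hE]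
    have hsq : ∀ x, J1 (J1 x) = x + E x := fun x => by rw [hE]; abel
    refine ⟨J1 - (2⁻¹ : F) • (J1 ∘ₗ E), fun x => ?_, fun x => ?_⟩
    · simp only [LinearMap.sub_apply, LinearMap.smul_apply, LinearMap.comp_apply, map_sub, map_smul,
        hJE, hsq, hEE, map_add]
      simp only [map_zero, smul_zero, add_zero, sub_zero]
      have : E x = (2⁻¹ : F) • E x + (2⁻¹ : F) • E x := by
        rw [← add_smul, ← two_mul, mul_inv_cancel₀ h2, one_smul]
      nth_rewrite 1 [this]
      abel
    · have e1 : E (M x) = 0 := hEW ⟨M x, hMW x⟩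
      have e2 : J1 (M x) = (J (Mr x) : V) := hJ1W (Mr x)
      have e3 : M (J1 (E x)) = 0 := by rw [hMJ1, hMrK _ (hME x)]; simp
      simp only [LinearMap.sub_apply, LinearMap.smul_apply, LinearMap.comp_apply, map_sub, map_smul,
        e1, e2, e3, hMJ1]
      simp

def IsUnip {F V : Type*} [Field F] [AddCommGroup V] [Module F V] (U : Module.End F V) : Prop :=
  IsNilpotent (U - 1)

theorem unip_two {F V : Type*} [Field F] (h2 : (2 : F) ≠ 0) [AddCommGroup V] [Module F V]
    (U : Module.End F V) (hU : IsUnip U) :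
    ∃ J K : Module.End F V, J * J = 1 ∧ K * K = 1 ∧ U = J * K := by
  have h2u : IsUnit (2 : Module.End F V) := by
    have : (2 : Module.End F V) = algebraMap F (Module.End F V) 2 := (map_ofNat _ 2).symm
    rw [this]; exact (IsUnit.mk0 _ h2).map _
  have hU1 : IsUnit (U + 1) := by
    have h := IsNilpotent.isUnit_add_left_of_commute (r := U - 1) (u := 2) hU h2u
      (by exact (Commute.ofNat_right _ 2))
    have e : (2 : Module.End F V) + (U - 1) = U + 1 := by
      rw [← one_add_one_eq_two]; abel
    rwa [e] at h
  obtain ⟨v, hv⟩ := hU1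
  set N := U - 1 with hN
  have hcomm : Commute N (v : Module.End F V) := by
    rw [hv, hN]; 
    exact ((Commute.refl U).sub_left (Commute.one_left U)).add_right (Commute.one_right _)
  have hcomm' : Commute N ((v⁻¹ : (Module.End F V)ˣ) : Module.End F V) := hcomm.units_inv_right
  set M : Module.End F V := N * ((v⁻¹ : (Module.End F V)ˣ) : Module.End F V) with hM
  have hMn : IsNilpotent M := hcomm'.isNilpotent_mul_right hU
  obtain ⟨k, hk⟩ := id hMn
  obtain ⟨J, hJ, hJM⟩ := nilp_anti h2 k M hk
  have hJJ : J * J = 1 := by ext x; simp [hJ]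
  have hJM' : J * M = - (M * J) := by ext x; simp [hJM]
  have hMv : M * (U + 1) = U - 1 := by rw [← hv, hM, mul_assoc]; simp [hN]
  have hcMU : Commute M U := by
    have : Commute U ((v⁻¹ : (Module.End F V)ˣ) : Module.End F V) := by
      have : Commute U (v : Module.End F V) := by
        rw [hv]; exact (Commute.refl U).add_right (Commute.one_right _)
      exact this.units_inv_right
    rw [hM]
    have hNU : Commute N U := (Commute.refl U).sub_left (Commute.one_left U)
    exact hNU.mul_left this.symm
  have h5 : U * (1 - M) = 1 + M := by
    have : M * U + M = U - 1 := by rw [← hMv]; noncomm_ring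
    have e : U * (1 - M) = U - M * U := by rw [mul_sub, mul_one, hcMU.eq]
    rw [e]
    have : U = M * U + M + 1 := by rw [this]; abel
    nth_rewrite 1 [this]; abel
  have h6 : (1 - M) * J = J * (1 + M) := by
    rw [sub_mul, mul_add, hJM']; simp; abel
  have h7 : (1 + M) * J = J * (1 - M) := by
    rw [add_mul, mul_sub, hJM']; simp
  have h8 : J * U * J * U * (1 - M) = 1 * (1 - M) := by
    calc J * U * J * U * (1 - M) = J * U * J * (U * (1 - M)) := by noncomm_ring
      _ = J * U * (J * (1 + M)) := by rw [h5]; noncomm_ring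
      _ = J * (U * (1 - M)) * J := by rw [← h6]; noncomm_ring
      _ = J * ((1 + M) * J) := by rw [h5]; noncomm_ring
      _ = (J * J) * (1 - M) := by rw [h7]; noncomm_ring
      _ = _ := by rw [hJJ]
  have h9 : J * U * J * U = 1 := hMn.isUnit_one_sub.mul_right_cancel h8
  refine ⟨J, J * U, hJJ, by rw [← h9]; noncomm_ring, by rw [← mul_assoc, hJJ, one_mul]⟩

section Split
variable {F V : Type*} [Field F] [AddCommGroup V] [Module F V]

/-- projection onto the kernel of a functional along a vector -/
def projK (φ : V →ₗ[F] F) (e : V) (he : φ e = 1) : V →ₗ[F] LinearMap.ker φ :=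
  (LinearMap.id - φ.smulRight e).codRestrict (LinearMap.ker φ) (fun x => by simp [he])

theorem projK_apply (φ : V →ₗ[F] F) (e : V) (he : φ e = 1) (x : V) :
    (projK φ e he x : V) = x - φ x • e := rfl

/-- Schur complement -/
def schurK (T : Module.End F V) (φ : V →ₗ[F] F) (e : V) (a : F) (ha : a ≠ 0) (hT : φ (T e) = a) :
    Module.End F (LinearMap.ker φ) :=
  ((T - ((a⁻¹ • (φ ∘ₗ T)).smulRight (T e))) ∘ₗ (LinearMap.ker φ).subtype).codRestrict
    (LinearMap.ker φ) (fun x => by simp [hT, ha, mul_right_comm])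

theorem schurK_apply (T : Module.End F V) (φ : V →ₗ[F] F) (e : V) (a : F) (ha : a ≠ 0)
    (hT : φ (T e) = a) (x : LinearMap.ker φ) :
    (schurK T φ e a ha hT x : V) = T x - (a⁻¹ * φ (T x)) • T e := rfl

theorem projK_e (φ : V →ₗ[F] F) (e : V) (he : φ e = 1) : projK φ e he e = 0 :=
  Subtype.ext (by rw [projK_apply]; simp [he])

theorem projK_ker (φ : V →ₗ[F] F) (e : V) (he : φ e = 1) (h : LinearMap.ker φ) :
    projK φ e he h = h := by
  have : φ (h : V) = 0 := h.2
  exact Subtype.ext (by rw [projK_apply]; simp [this])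

theorem det_schurK [FiniteDimensional F V] (T : Module.End F V) (φ : V →ₗ[F] F) (e : V) (a : F)
    (ha : a ≠ 0) (he : φ e = 1) (hT : φ (T e) = a) :
    LinearMap.det T = a * LinearMap.det (schurK T φ e a ha hT) := by
  have hφk : ∀ h : LinearMap.ker φ, φ (h : V) = 0 := fun h => h.2
  let eq : (F × LinearMap.ker φ) ≃ₗ[F] V :=
    { toFun := fun z => z.1 • e + (z.2 : V)
      map_add' := fun x y => by simp [add_smul]; abel
      map_smul' := fun c x => by simp [mul_smul]
      invFun := fun x => (φ x, projK φ e he x)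
      left_inv := fun z => by
        ext
        · simp [he, hφk]
        · simp [projK_apply, he, hφk]
      right_inv := fun x => by simp [projK_apply] }
  let S := schurK T φ e a ha hT
  let G : Module.End F V := (eq : (F × LinearMap.ker φ) →ₗ[F] V) ∘ₗ
    (LinearMap.prodMap (a • LinearMap.id) S) ∘ₗ (eq.symm : V →ₗ[F] (F × LinearMap.ker φ))
  let f : V →ₗ[F] F := a⁻¹ • (φ ∘ₗ T ∘ₗ (LinearMap.ker φ).subtype ∘ₗ projK φ e he)
  have hf : ∀ x, f x = a⁻¹ * φ (T (x - φ x • e)) := fun x => rfl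
  have hG : ∀ x, G x = (a * φ x) • e + (S (projK φ e he x) : V) := fun x => rfl
  have hTe : T = LinearMap.transvection φ (a⁻¹ • T e - e) * G * LinearMap.transvection f e := by
    ext x
    simp only [Module.End.mul_apply]
    have h1 : LinearMap.transvection f e x = x + f x • e := rfl
    have h2 : ∀ y, LinearMap.transvection φ (a⁻¹ • T e - e) y = y + φ y • (a⁻¹ • T e - e) := fun y => rfl
    rw [h2, hG, h1]
    have h3 : projK φ e he (x + f x • e) = projK φ e he x := by
      rw [map_add, map_smul, projK_e]; simp
    have h4 : a * φ (x + f x • e) = φ (T x) := by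
      rw [map_add, map_smul, he, hf]
      simp only [map_sub, map_smul, hT, smul_eq_mul]
      field_simp
      ring
    have h5 : φ (φ (T x) • e + (S (projK φ e he x) : V)) = φ (T x) := by
      rw [map_add, map_smul, he, hφk]; simp
    rw [h3, h4, h5]
    have h6 : (S (projK φ e he x) : V) = T (x - φ x • e) - (a⁻¹ * φ (T (x - φ x • e))) • T e := rfl
    rw [h6]
    simp only [map_sub, map_smul, hT, smul_eq_mul]
    match_scalars <;> field_simp <;> ring
  have hdG : LinearMap.det G = a * LinearMap.det S := by
    have : LinearMap.det G = _ := LinearMap.det_conj _ eq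
    rw [this, LinearMap.det_prodMap, LinearMap.det_smul]; simp
  conv_lhs => rw [hTe]
  rw [map_mul, map_mul, hdG, LinearMap.transvection.det, LinearMap.transvection.det]
  have : f e = 0 := by rw [hf, he]; simp
  rw [this]
  simp [he, hT, ha, S]

/-- the lower triangular factor -/
theorem lower_unip (T : Module.End F V) (φ : V →ₗ[F] F) (e : V) (a : F)
    (ha : a ≠ 0) (he : φ e = 1) (hT : φ (T e) = a) (A' : Module.End F (LinearMap.ker φ))
    (hA' : IsUnip A') (A : Module.End F V)
    (hA : ∀ x, A x = (a⁻¹ * φ x) • T e + (A' (projK φ e he x) : V)) : IsUnip A := by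
  obtain ⟨k, hk⟩ := hA'
  refine ⟨k + 1, ?_⟩
  have hφk : ∀ h : LinearMap.ker φ, φ (h : V) = 0 := fun h => h.2
  have h1 : ∀ h : LinearMap.ker φ, (A - 1) (h : V) = ((A' - 1) h : LinearMap.ker φ) := by
    intro h
    rw [LinearMap.sub_apply, hA, hφk, projK_ker]; simp
  have h2 : ∀ j : ℕ, ∀ h : LinearMap.ker φ, ((A - 1) ^ j) (h : V) = (((A' - 1) ^ j) h : LinearMap.ker φ) := by
    intro j
    induction j with
    | zero => intro h; simp
    | succ j ih => intro h; rw [pow_succ, pow_succ, Module.End.mul_apply, Module.End.mul_apply, h1, ih]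
  ext x
  rw [pow_succ, Module.End.mul_apply]
  have h3 : φ ((A - 1) x) = 0 := by
    rw [LinearMap.sub_apply, hA]
    simp [hφk, hT]; field_simp; simp
  have := h2 k ⟨(A - 1) x, h3⟩
  rw [this, hk]; simp

theorem upper_unip (T : Module.End F V) (φ : V →ₗ[F] F) (e : V)
    (he : φ e = 1) (hT : φ (T e) = 1) (B' : Module.End F (LinearMap.ker φ))
    (hB' : IsUnip B') (B : Module.End F V)
    (hB : ∀ x, B x = φ (T x) • e + (B' (projK φ e he x) : V)) : IsUnip B := by
  obtain ⟨k, hk⟩ := hB'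
  refine ⟨k + 1, ?_⟩
  have hφk : ∀ h : LinearMap.ker φ, φ (h : V) = 0 := fun h => h.2
  have h1 : ∀ x, projK φ e he ((B - 1) x) = (B' - 1) (projK φ e he x) := by
    intro h
    rw [LinearMap.sub_apply, hB, map_sub, map_add, map_smul, projK_e, projK_ker]; simp
  have h2 : ∀ j : ℕ, ∀ x, projK φ e he (((B - 1) ^ j) x) = ((B' - 1) ^ j) (projK φ e he x) := by
    intro j
    induction j with
    | zero => intro h; simp
    | succ j ih => intro h; rw [pow_succ, pow_succ, Module.End.mul_apply, Module.End.mul_apply, ih, h1]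
  ext x
  rw [pow_succ', Module.End.mul_apply]
  have h3 := h2 k x
  rw [hk] at h3
  have h4 := projK_apply φ e he (((B - 1) ^ k) x)
  rw [h3] at h4
  have h5 : ((B - 1) ^ k) x = φ (((B - 1) ^ k) x) • e := by
    rw [eq_comm, ← sub_eq_zero, ← neg_sub, ← h4]; simp
  have h6 : (B - 1) e = 0 := by rw [LinearMap.sub_apply, hB, projK_e, hT]; simp
  rw [h5, map_smul, h6]; simp

theorem factor_eq (T : Module.End F V) (φ : V →ₗ[F] F) (e : V) (a : F)
    (ha : a ≠ 0) (he : φ e = 1) (hT : φ (T e) = a) (A' B' : Module.End F (LinearMap.ker φ))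
    (hS : schurK T φ e a ha hT = A' * B') :
    ∃ A B : Module.End F V, T = A * B ∧
      (∀ x, A x = (a⁻¹ * φ x) • T e + (A' (projK φ e he x) : V)) ∧
      (∀ x, B x = φ (T x) • e + (B' (projK φ e he x) : V)) := by
  have hφk : ∀ h : LinearMap.ker φ, φ (h : V) = 0 := fun h => h.2
  let A : Module.End F V := (a⁻¹ • φ).smulRight (T e) + (LinearMap.ker φ).subtype ∘ₗ A' ∘ₗ projK φ e he
  let B : Module.End F V := (φ ∘ₗ T).smulRight e + (LinearMap.ker φ).subtype ∘ₗ B' ∘ₗ projK φ e he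
  have hA : ∀ x, A x = (a⁻¹ * φ x) • T e + (A' (projK φ e he x) : V) := fun x => rfl
  have hB : ∀ x, B x = φ (T x) • e + (B' (projK φ e he x) : V) := fun x => rfl
  refine ⟨A, B, ?_, hA, hB⟩
  ext x
  rw [Module.End.mul_apply, hA]
  have h1 : φ (B x) = φ (T x) := by rw [hB]; simp [he, hφk]
  have h2 : projK φ e he (B x) = B' (projK φ e he x) := by
    rw [hB, map_add, map_smul, projK_e, projK_ker]; simp
  have h3 : A' (B' (projK φ e he x)) = schurK T φ e a ha hT (projK φ e he x) := by rw [hS]; rfl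
  rw [h1, h2, h3, schurK_apply, projK_apply]
  simp only [map_sub, map_smul, hT, smul_eq_mul]
  match_scalars <;> field_simp <;> ring

theorem exists_split [FiniteDimensional F V] (T : Module.End F V) (hinj : Function.Injective T)
    (hns : ¬ ∃ c : F, ∀ x, T x = c • x) (a : F) (ha : a ≠ 0) :
    ∃ (φ : V →ₗ[F] F) (e : V), φ e = 1 ∧ φ (T e) = a ∧ (3 ≤ Module.finrank F V →
      ¬ ∃ c : F, ∀ x : V, φ x = 0 → T x - (a⁻¹ * φ (T x)) • T e = c • x) := by
  obtain ⟨e, he0⟩ : ∃ e, LinearIndependent F ![e, T e] := by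
    by_contra! h
    obtain ⟨c, hc⟩ := LinearMap.exists_eq_smul_id_of_forall_notLinearIndependent h
    exact hns ⟨c, fun x => by rw [hc]; rfl⟩
  rw [LinearIndependent.pair_iff] at he0
  have hmem : ∀ x y : V, x ∈ Submodule.span F {y} ↔ ∃ c : F, c • y = x := fun x y =>
    Submodule.mem_span_singleton
  have n1 : e ∉ Submodule.span F {T e} := by
    rw [hmem]; rintro ⟨c, hc⟩
    have := (he0 1 (-c) (by rw [one_smul, neg_smul, hc]; simp)).1
    exact one_ne_zero this
  have n2 : T e ∉ Submodule.span F {e} := by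
    rw [hmem]; rintro ⟨c, hc⟩
    have := (he0 (-c) 1 (by rw [one_smul, neg_smul, hc]; simp)).2
    exact one_ne_zero this
  obtain ⟨f1, hf1, hf1'⟩ := Submodule.exists_le_ker_of_notMem n1
  obtain ⟨f2, hf2, hf2'⟩ := Submodule.exists_le_ker_of_notMem n2
  have g1 : f1 (T e) = 0 := hf1' (Submodule.mem_span_singleton_self _)
  have g2 : f2 e = 0 := hf2' (Submodule.mem_span_singleton_self _)
  let φ : V →ₗ[F] F := (f1 e)⁻¹ • f1 + (a * (f2 (T e))⁻¹) • f2
  have hφe : φ e = 1 := by simp [φ, g2, hf1]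
  have hφT : φ (T e) = a := by simp [φ, g1, hf2]
  by_cases h3 : 3 ≤ Module.finrank F V
  swap
  · exact ⟨φ, e, hφe, hφT, fun h => absurd h h3⟩
  by_cases hsc : ∃ c : F, ∀ x : V, φ x = 0 → T x - (a⁻¹ * φ (T x)) • T e = c • x
  swap
  · exact ⟨φ, e, hφe, hφT, fun _ => hsc⟩
  obtain ⟨c, hc⟩ := hsc
  have hspan : ∃ v, v ∉ Submodule.span F (Set.range ![e, T e]) := by
    by_contra! h
    have htop : Submodule.span F (Set.range ![e, T e]) = ⊤ := eq_top_iff.2 (fun x _ => h x)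
    have := finrank_range_le_card (R := F) ![e, T e]
    rw [Set.finrank, htop, finrank_top] at this
    simp at this; omega
  obtain ⟨v, hv⟩ := hspan
  obtain ⟨ψ, hψ, hψ'⟩ := Submodule.exists_le_ker_of_notMem hv
  have p1 : ψ e = 0 := hψ' (Submodule.subset_span ⟨0, rfl⟩)
  have p2 : ψ (T e) = 0 := hψ' (Submodule.subset_span ⟨1, rfl⟩)
  refine ⟨φ + ψ, e, by simp [hφe, p1], by simp [hφT, p2], fun _ => ?_⟩
  rintro ⟨c', hc'⟩
  have q1 := hc (T e - a • e) (by simp [hφe, hφT])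
  have q2 := hc' (T e - a • e) (by simp [hφe, hφT, p1, p2])
  have key : ∀ x y : F, x • e + y • T e = 0 → x = 0 ∧ y = 0 := he0
  have hcc : c = c' := by
    have h : (-(a * (c - c'))) • e + ((c - c') + (a⁻¹ * φ (T (T e - a • e)) -
        a⁻¹ * (φ + ψ) (T (T e - a • e)))) • T e = 0 := by
      have := congrArg₂ (· - ·) q1 q2
      rw [← sub_eq_zero] at this
      rw [← neg_eq_zero, ← this]
      module
    have := (key _ _ h).1
    simp [ha, sub_eq_zero] at this
    exact this
  subst hcc
  have hall : ∀ x, ∃ μ : F, T x = c • x + μ • T e := by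
    intro x
    obtain ⟨w, hw1, hw2⟩ : ∃ w, φ w = 0 ∧ (φ + ψ) w = 1 := by
      refine ⟨(ψ v)⁻¹ • (v - φ v • e), by simp [hφe], by simp [hφe, p1, hψ]⟩
    have r1 := hc ((φ + ψ) x • w) (by simp [hw1])
    have r2 := hc' (x - (φ + ψ) x • w) (by rw [map_sub, map_smul, hw2]; simp)
    refine ⟨a⁻¹ * φ (T ((φ + ψ) x • w)) + a⁻¹ * (φ + ψ) (T (x - (φ + ψ) x • w)), ?_⟩
    have e1 := sub_eq_iff_eq_add.1 r1
    have e2 := sub_eq_iff_eq_add.1 r2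
    have e3 : T x = T ((φ + ψ) x • w) + T (x - (φ + ψ) x • w) := by rw [← map_add]; congr 1; abel
    refine (e3.trans (congrArg₂ (· + ·) e1 e2)).trans ?_
    module
  obtain ⟨μ, hμ⟩ := hall e
  have hc0 : c = 0 := (key c (μ - 1) (by rw [sub_smul, one_smul]; nth_rewrite 2 [hμ]; abel)).1
  have q1' := hc (T e - a • e) (by simp [hφe, hφT])
  rw [hc0, zero_smul, ← map_smul, ← map_sub] at q1'
  have := hinj (q1'.trans (map_zero T).symm)
  have h := key (-a - (a⁻¹ * φ (T (T e - a • e)))) 1 (by rw [← this]; module)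
  exact one_ne_zero h.2

end Split

theorem two_unip {F : Type*} [Field F] (n : ℕ) :
    ∀ {V : Type*} [AddCommGroup V] [Module F V] [FiniteDimensional F V] (T : Module.End F V),
      Module.finrank F V = n → LinearMap.det T = 1 →
      (n ≤ 1 ∨ ¬ ∃ c : F, ∀ x, T x = c • x) →
      ∃ A B : Module.End F V, IsUnip A ∧ IsUnip B ∧ T = A * B := by
  induction n with
  | zero =>
    intro V _ _ _ T hn _ _
    have : Subsingleton V := Module.finrank_zero_iff.1 hn
    exact ⟨1, 1, ⟨1, by simp⟩, ⟨1, by simp⟩, by ext x; exact Subsingleton.elim _ _⟩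
  | succ n ih =>
    intro V _ _ _ T hn hdet hT
    by_cases hs : ∃ c : F, ∀ x, T x = c • x
    · have hn0 : n = 0 := by
        rcases hT with h | h
        · omega
        · exact absurd hs h
      obtain ⟨c, hc⟩ := hs
      have hTc : T = c • LinearMap.id := by ext x; simp [hc]
      have hc1 : c = 1 := by
        rw [hTc, LinearMap.det_smul, hn, hn0] at hdet
        simpa using hdet
      refine ⟨1, 1, ⟨1, by simp⟩, ⟨1, by simp⟩, ?_⟩
      rw [hTc, hc1]; ext; simp
    · have hinj : Function.Injective T := by
        rw [← LinearMap.ker_eq_bot]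
        by_contra h
        have := LinearMap.det_eq_zero_iff_ker_ne_bot.2 h
        rw [hdet] at this; exact one_ne_zero this
      obtain ⟨φ, e, he, hTe, hsc⟩ := exists_split T hinj hs 1 one_ne_zero
      have hdS := det_schurK T φ e 1 one_ne_zero he hTe
      rw [hdet, one_mul] at hdS
      have hfr : Module.finrank F (LinearMap.ker φ) = n := by
        have h1 := LinearMap.finrank_range_add_finrank_ker φ
        have h2 : LinearMap.range φ = ⊤ := by
          rw [LinearMap.range_eq_top]; intro c; exact ⟨c • e, by simp [he]⟩
        rw [h2, hn, finrank_top, Module.finrank_self] at h1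
        omega
      obtain ⟨A', B', hA', hB', hS⟩ := ih (schurK T φ e 1 one_ne_zero hTe) hfr hdS.symm (by
        by_cases hn1 : n ≤ 1
        · exact Or.inl hn1
        · right
          rintro ⟨c, hc⟩
          refine hsc (by omega) ⟨c, fun x hx => ?_⟩
          have := congrArg (fun z : LinearMap.ker φ => (z : V)) (hc ⟨x, hx⟩)
          simpa [schurK_apply] using this)
      obtain ⟨A, B, hAB, hA, hB⟩ := factor_eq T φ e 1 one_ne_zero he hTe A' B' hS
      exact ⟨A, B, lower_unip T φ e 1 one_ne_zero he hTe A' hA' A hA,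
        upper_unip T φ e he hTe B' hB' B hB, hAB⟩

theorem upper_two {F V : Type*} [Field F] (h2 : (2 : F) ≠ 0) [AddCommGroup V] [Module F V]
    (T : Module.End F V) (φ : V →ₗ[F] F) (e : V)
    (he : φ e = 1) (hT : φ (T e) = -1) (B' : Module.End F (LinearMap.ker φ))
    (hB' : IsUnip B') (B : Module.End F V)
    (hB : ∀ x, B x = φ (T x) • e + (B' (projK φ e he x) : V)) :
    ∃ J K : Module.End F V, J * J = 1 ∧ K * K = 1 ∧ B = J * K := by
  obtain ⟨J', K', hJ', hK', hJK⟩ := unip_two h2 B' hB'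
  have hφk : ∀ h : LinearMap.ker φ, φ (h : V) = 0 := fun h => h.2
  set p := projK φ e he with hp
  have h2u : IsUnit (2 : Module.End F (LinearMap.ker φ)) := by
    have : (2 : Module.End F (LinearMap.ker φ)) = algebraMap F _ 2 := (map_ofNat _ 2).symm
    rw [this]; exact (IsUnit.mk0 _ h2).map _
  have hU1 : IsUnit (B' + 1) := by
    have h := IsNilpotent.isUnit_add_left_of_commute (r := B' - 1) (u := 2) hB' h2u
      (by exact (Commute.ofNat_right _ 2))
    have e : (2 : Module.End F (LinearMap.ker φ)) + (B' - 1) = B' + 1 := by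
      rw [← one_add_one_eq_two]; abel
    rwa [e] at h
  obtain ⟨v, hv⟩ := hU1
  let r : LinearMap.ker φ →ₗ[F] F := φ ∘ₗ T ∘ₗ (LinearMap.ker φ).subtype
  let y : LinearMap.ker φ →ₗ[F] F := - (r ∘ₗ ((v⁻¹ : (Module.End F (LinearMap.ker φ))ˣ) : Module.End F (LinearMap.ker φ)))
  have hy : ∀ h, y (B' h) + y h = - φ (T h) := by
    intro h
    rw [← map_add]
    have : B' h + h = (v : Module.End F (LinearMap.ker φ)) h := by rw [hv]; simp
    rw [this]
    have h3 : (((v⁻¹ : (Module.End F (LinearMap.ker φ))ˣ) : Module.End F (LinearMap.ker φ)))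
        ((v : Module.End F (LinearMap.ker φ)) h) = h := by
      rw [← Module.End.mul_apply]; simp
    simp only [y, LinearMap.neg_apply, LinearMap.comp_apply, h3]
    rfl
  let ψ : V →ₗ[F] F := φ + y ∘ₗ p
  have hψ : ∀ x, ψ x = φ x + y (p x) := fun x => rfl
  let s : LinearMap.ker φ →ₗ[F] V := (LinearMap.ker φ).subtype - y.smulRight e
  have hs : ∀ h, s h = (h : V) - y h • e := fun h => rfl
  have pe : p e = 0 := projK_e φ e he
  have ps : ∀ h, p (s h) = h := fun h => by rw [hs, map_sub, map_smul, pe, hp, projK_ker]; simp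
  have ψe : ψ e = 1 := by rw [hψ, he, pe]; simp
  have ψs : ∀ h, ψ (s h) = 0 := fun h => by
    rw [hψ, ps, hs, map_sub, map_smul, he, hφk]; simp
  have hx : ∀ x, x = ψ x • e + s (p x) := fun x => by
    rw [hs, hψ, hp, projK_apply]; module
  have pB : ∀ x, p (B x) = B' (p x) := fun x => by
    rw [hB, map_add, map_smul, pe, hp, projK_ker]; simp
  have ψB : ∀ x, ψ (B x) = - ψ x := fun x => by
    rw [hψ, hψ, pB, hB, map_add, map_smul, he, hφk]
    have h4 := hy (p x)
    have h5 : φ (T (p x : V)) = φ (T x) + φ x := by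
      rw [hp, projK_apply, map_sub, map_smul, map_sub, map_smul, hT]; simp
    rw [h5] at h4
    simp only [smul_eq_mul]
    linear_combination h4
  let J : Module.End F V := - ψ.smulRight e + s ∘ₗ J' ∘ₗ p
  let K : Module.End F V := ψ.smulRight e + s ∘ₗ K' ∘ₗ p
  have hJ : ∀ x, J x = - (ψ x • e) + s (J' (p x)) := fun x => rfl
  have hK : ∀ x, K x = ψ x • e + s (K' (p x)) := fun x => rfl
  have hJJ : ∀ x, J' (J' x) = x := fun x => by rw [← Module.End.mul_apply, hJ']; simp
  have hKK : ∀ x, K' (K' x) = x := fun x => by rw [← Module.End.mul_apply, hK']; simp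
  have hJKx : ∀ x, J' (K' x) = B' x := fun x => by rw [← Module.End.mul_apply, hJK]
  refine ⟨J, K, ?_, ?_, ?_⟩
  · ext x
    rw [Module.End.mul_apply, hJ (J x), hJ x]
    simp only [map_add, map_neg, map_smul, ψe, ψs, pe, ps, hJJ]
    simp only [Module.End.one_apply]
    refine Eq.trans ?_ (hx x).symm
    simp
  · ext x
    rw [Module.End.mul_apply, hK (K x), hK x]
    simp only [map_add, map_smul, ψe, ψs, pe, ps, hKK]
    simp only [Module.End.one_apply]
    refine Eq.trans ?_ (hx x).symm
    simp
  · ext x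
    rw [Module.End.mul_apply, hJ (K x), hK x]
    simp only [map_add, map_smul, ψe, ψs, pe, ps, hJKx]
    rw [hx (B x), ψB, pB]
    simp

theorem nonscalar_four {F V : Type*} [Field F] (h2 : (2 : F) ≠ 0) [AddCommGroup V] [Module F V]
    [FiniteDimensional F V] (T : Module.End F V) (hs : ¬ ∃ c : F, ∀ x, T x = c • x)
    (hdet : LinearMap.det T = 1 ∨ LinearMap.det T = -1) :
    ∃ J₁ J₂ J₃ J₄ : Module.End F V, J₁ * J₁ = 1 ∧ J₂ * J₂ = 1 ∧ J₃ * J₃ = 1 ∧ J₄ * J₄ = 1 ∧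
      T = J₁ * J₂ * J₃ * J₄ := by
  suffices h : ∃ A B : Module.End F V, T = A * B ∧ IsUnip A ∧
      ∃ J K : Module.End F V, J * J = 1 ∧ K * K = 1 ∧ B = J * K by
    obtain ⟨A, B, hAB, hA, J₃, J₄, h3, h4, hB⟩ := h
    obtain ⟨J₁, J₂, h1, h2, hA⟩ := unip_two h2 A hA
    exact ⟨J₁, J₂, J₃, J₄, h1, h2, h3, h4, by rw [hAB, hA, hB, mul_assoc, mul_assoc, mul_assoc]⟩
  rcases hdet with hdet | hdet
  · obtain ⟨A, B, hA, hB, hAB⟩ := two_unip _ T rfl hdet (Or.inr hs)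
    exact ⟨A, B, hAB, hA, unip_two h2 B hB⟩
  · have hinj : Function.Injective T := by
      rw [← LinearMap.ker_eq_bot]
      by_contra h
      have := LinearMap.det_eq_zero_iff_ker_ne_bot.2 h
      rw [hdet] at this; simp at this
    have hne : (-1 : F) ≠ 0 := by simp
    obtain ⟨φ, e, he, hTe, hsc⟩ := exists_split T hinj hs (-1) hne
    have hdS := det_schurK T φ e (-1) hne he hTe
    rw [hdet] at hdS
    have hfr : Module.finrank F (LinearMap.ker φ) + 1 = Module.finrank F V := by
      have h1 := LinearMap.finrank_range_add_finrank_ker φ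
      have h2 : LinearMap.range φ = ⊤ := by
        rw [LinearMap.range_eq_top]; intro c; exact ⟨c • e, by simp [he]⟩
      rw [h2, finrank_top, Module.finrank_self] at h1
      omega
    obtain ⟨A', B', hA', hB', hS⟩ := two_unip _ (schurK T φ e (-1) hne hTe) rfl
      (by simpa using hdS.symm) (by
        by_cases hn1 : Module.finrank F (LinearMap.ker φ) ≤ 1
        · exact Or.inl hn1
        · right
          rintro ⟨c, hc⟩
          refine hsc (by omega) ⟨c, fun x hx => ?_⟩
          have := congrArg (fun z : LinearMap.ker φ => (z : V)) (hc ⟨x, hx⟩)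
          exact this)
    obtain ⟨A, B, hAB, hA, hB⟩ := factor_eq T φ e (-1) hne he hTe A' B' hS
    exact ⟨A, B, hAB, lower_unip T φ e (-1) hne he hTe A' hA' A hA,
      upper_two h2 T φ e he hTe B' hB' B hB⟩

theorem diag_two {F ι : Type*} [Field F] (d : ι → F) (σ : ι → ι) (hσ : ∀ i, σ (σ i) = i)
    (hd : ∀ i, d i * d (σ i) = 1) :
    ∃ J K : Module.End F (ι → F), J * J = 1 ∧ K * K = 1 ∧ ∀ x i, (J * K) x i = d i * x i := by
  let K : Module.End F (ι → F) :=
    { toFun := fun x i => x (σ i)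
      map_add' := fun x y => rfl
      map_smul' := fun c x => rfl }
  let J : Module.End F (ι → F) :=
    { toFun := fun x i => d i * x (σ i)
      map_add' := fun x y => by ext i; simp [mul_add]
      map_smul' := fun c x => by ext i; simp [mul_left_comm] }
  have hK : ∀ x i, K x i = x (σ i) := fun x i => rfl
  have hJ : ∀ x i, J x i = d i * x (σ i) := fun x i => rfl
  refine ⟨J, K, ?_, ?_, ?_⟩
  · refine LinearMap.ext fun x => funext fun i => ?_
    rw [Module.End.mul_apply, hJ, hJ, hσ, ← mul_assoc, hd]; simp
  · refine LinearMap.ext fun x => funext fun i => ?_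
    rw [Module.End.mul_apply, hK, hK, hσ]; simp
  · intro x i
    rw [Module.End.mul_apply, hJ, hK, hσ]

theorem pair_two {F : Type*} [Field F] (n b : ℕ) (α : F) (hα0 : α ≠ 0) (hα : α ^ n * α ^ n = 1)
    (hb : b < 2) :
    ∃ J K : Module.End F (Fin n → F), J * J = 1 ∧ K * K = 1 ∧
      ∀ x i, (J * K) x i = (if (i : ℕ) % 2 = b then α ^ ((i : ℕ) + 1) else (α ^ (i : ℕ))⁻¹) * x i := by
  let σ : Fin n → Fin n := fun i =>
    if (i : ℕ) % 2 = b then (if h : (i : ℕ) + 1 < n then ⟨i + 1, h⟩ else i)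
    else ⟨i - 1, by omega⟩
  have s1 : ∀ i : Fin n, (i : ℕ) % 2 = b → (i : ℕ) + 1 < n → (σ i : ℕ) = i + 1 := by
    intro i h1 h2; simp [σ, h1, h2]
  have s2 : ∀ i : Fin n, (i : ℕ) % 2 = b → ¬ (i : ℕ) + 1 < n → σ i = i := by
    intro i h1 h2; simp [σ, h1, h2]
  have s3 : ∀ i : Fin n, ¬ (i : ℕ) % 2 = b → (σ i : ℕ) = i - 1 := by
    intro i h1; simp [σ, h1]
  refine diag_two _ σ ?_ ?_
  · intro i
    by_cases h1 : (i : ℕ) % 2 = b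
    · by_cases h2 : (i : ℕ) + 1 < n
      · have h3 := s1 i h1 h2
        apply Fin.ext
        rw [s3 _ (by omega)]; omega
      · rw [s2 i h1 h2, s2 i h1 h2]
    · have h3 := s3 i h1
      by_cases h0 : (i : ℕ) = 0
      · have : σ i = i := Fin.ext (by omega)
        rw [this, this]
      · apply Fin.ext
        rw [s1 _ (by omega) (by omega)]; omega
  · intro i
    by_cases h1 : (i : ℕ) % 2 = b
    · by_cases h2 : (i : ℕ) + 1 < n
      · have h3 := s1 i h1 h2
        rw [if_pos h1, if_neg (by omega), h3]
        exact mul_inv_cancel₀ (pow_ne_zero _ hα0)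
      · rw [s2 i h1 h2, if_pos h1]
        have : (i : ℕ) + 1 = n := by omega
        rw [this, hα]
    · have h3 := s3 i h1
      by_cases h0 : (i : ℕ) = 0
      · have : σ i = i := Fin.ext (by omega)
        rw [this, if_neg h1, h0]; simp
      · rw [if_neg h1, if_pos (by omega), h3, Nat.sub_add_cancel (by omega)]
        exact inv_mul_cancel₀ (pow_ne_zero _ hα0)

theorem scalar_four {F : Type*} [Field F] (n : ℕ) (α : F) (hα0 : α ≠ 0) (hα : α ^ n * α ^ n = 1)
    (T : Module.End F (Fin n → F)) (hT : ∀ x, T x = α • x) :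
    ∃ J₁ J₂ J₃ J₄ : Module.End F (Fin n → F), J₁ * J₁ = 1 ∧ J₂ * J₂ = 1 ∧ J₃ * J₃ = 1 ∧
      J₄ * J₄ = 1 ∧ T = J₁ * J₂ * J₃ * J₄ := by
  obtain ⟨J₁, J₂, h1, h2, h12⟩ := pair_two n 0 α hα0 hα (by norm_num)
  obtain ⟨J₃, J₄, h3, h4, h34⟩ := pair_two n 1 α hα0 hα (by norm_num)
  refine ⟨J₁, J₂, J₃, J₄, h1, h2, h3, h4, ?_⟩
  refine LinearMap.ext fun x => funext fun i => ?_
  rw [mul_assoc (J₁ * J₂), Module.End.mul_apply, h12, h34, hT, Pi.smul_apply, smul_eq_mul,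
    ← mul_assoc]
  congr 1
  rcases Nat.mod_two_eq_zero_or_one (i : ℕ) with h | h
  · rw [if_pos h, if_neg (by omega), pow_succ]
    field_simp
  · rw [if_neg (by omega), if_pos h, pow_succ]
    field_simp

theorem mem_prodInv4_iff {F : Type*} [Field F] (h2 : (2 : F) ≠ 0) (n : ℕ)
    (A : Matrix (Fin n) (Fin n) F) : A ∈ ProdInv4 F n ↔ A.det = 1 ∨ A.det = -1 := by
  constructor
  · rintro ⟨J₁, J₂, J₃, J₄, h1, h2, h3, h4, rfl⟩
    have hd : ∀ J : Matrix (Fin n) (Fin n) F, J * J = 1 → J.det * J.det = 1 := fun J hJ => by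
      rw [← det_mul, hJ, det_one]
    rw [← mul_self_eq_one_iff]
    simp only [det_mul]
    linear_combination (J₂.det * J₂.det * J₃.det * J₃.det * J₄.det * J₄.det) * hd _ h1 +
      (J₃.det * J₃.det * J₄.det * J₄.det) * hd _ h2 + (J₄.det * J₄.det) * hd _ h3 + hd _ h4
  · intro hA
    have hdet : LinearMap.det (Matrix.toLin' A) = 1 ∨ LinearMap.det (Matrix.toLin' A) = -1 := by
      rwa [LinearMap.det_toLin']
    have key : ∃ J₁ J₂ J₃ J₄ : Module.End F (Fin n → F), J₁ * J₁ = 1 ∧ J₂ * J₂ = 1 ∧ J₃ * J₃ = 1 ∧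
      J₄ * J₄ = 1 ∧ Matrix.toLin' A = J₁ * J₂ * J₃ * J₄ := by
      by_cases hs : ∃ c : F, ∀ x, Matrix.toLin' A x = c • x
      · obtain ⟨c, hc⟩ := hs
        have hd : LinearMap.det (Matrix.toLin' A) = c ^ n := by
          have : Matrix.toLin' A = c • LinearMap.id := LinearMap.ext fun x => by rw [hc]; rfl
          rw [this, LinearMap.det_smul]; simp
        rw [hd] at hdet
        rcases Nat.eq_zero_or_pos n with rfl | hn
        · exact ⟨1, 1, 1, 1, by simp, by simp, by simp, by simp,
            LinearMap.ext fun x => Subsingleton.elim _ _⟩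
        refine scalar_four n c ?_ (mul_self_eq_one_iff.2 hdet) _ hc
        rintro rfl
        rw [zero_pow hn.ne'] at hdet
        rcases hdet with h | h <;> simp at h
      · exact nonscalar_four h2 _ hs hdet
    obtain ⟨J₁, J₂, J₃, J₄, h1, h2, h3, h4, h⟩ := key
    have e1 : ∀ J : Module.End F (Fin n → F), J * J = 1 →
        LinearMap.toMatrix' J * LinearMap.toMatrix' J = 1 := fun J hJ => by
      rw [← LinearMap.toMatrix'_mul, hJ, LinearMap.toMatrix'_one]
    refine ⟨LinearMap.toMatrix' J₁, LinearMap.toMatrix' J₂, LinearMap.toMatrix' J₃,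
      LinearMap.toMatrix' J₄, e1 _ h1, e1 _ h2, e1 _ h3, e1 _ h4, ?_⟩
    rw [← LinearMap.toMatrix'_mul, ← LinearMap.toMatrix'_mul, ← LinearMap.toMatrix'_mul, ← h]
    simp

theorem det_line {F : Type*} [Field F] {n : ℕ} (A B : Matrix (Fin n) (Fin n) F) :
    ∃ p : Polynomial F, ∀ a : F, p.eval a = (A + a • B).det := by
  refine ⟨(A.map Polynomial.C + (Polynomial.X : Polynomial F) • B.map Polynomial.C).det, ?_⟩
  intro a
  rw [← Polynomial.coe_evalRingHom, RingHom.map_det]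
  congr 1
  ext i j
  simp [RingHom.mapMatrix_apply, Matrix.map_apply]
  exact mul_comm _ _

theorem det_sq_eq {F : Type*} [Field F] [Infinite F] {n : ℕ} (hn : 2 ≤ n)
    (T : Matrix (Fin n) (Fin n) F →ₗ[F] Matrix (Fin n) (Fin n) F)
    (h : ∀ X, X.det ^ 2 = 1 → (T X).det ^ 2 = 1) (X : Matrix (Fin n) (Fin n) F) :
    (T X).det ^ 2 = X.det ^ 2 := by
  have step1 : ∀ (X : Matrix (Fin n) (Fin n) F) (s : F), s ≠ 0 → X.det = s ^ n →
      (T X).det ^ 2 = (s ^ n) ^ 2 := by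
    intro X s hs hX
    have hsn : s ^ n ≠ 0 := pow_ne_zero _ hs
    have := h (s⁻¹ • X) (by rw [det_smul, hX]; simp [hsn])
    rw [map_smul, det_smul] at this
    simp only [Fintype.card_fin, inv_pow] at this
    field_simp at this
    exact this
  have step2 : ∀ X : Matrix (Fin n) (Fin n) F, X.det ≠ 0 → (T X).det ^ 2 = X.det ^ 2 := by
    intro X hX
    let z : Fin n := ⟨0, by omega⟩
    let A := X * diagonal (Function.update 1 z 0)
    let B := X * diagonal (Pi.single z X.det⁻¹)
    have hAB : ∀ a : F, A + a • B = X * diagonal (Function.update 1 z (a * X.det⁻¹)) := by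
      intro a
      simp only [A, B]
      rw [← Matrix.mul_smul, ← Matrix.mul_add, ← diagonal_smul, diagonal_add]
      congr 2
      ext i
      by_cases hi : i = z
      · subst hi; simp
      · simp [hi]
    have hdet : ∀ a : F, (A + a • B).det = a := by
      intro a
      rw [hAB, det_mul, det_diagonal, Finset.prod_update_of_mem (Finset.mem_univ _)]
      simp
      field_simp
    obtain ⟨p, hp⟩ := det_line (T A) (T B)
    have hq : p ^ 2 = Polynomial.X ^ 2 := by
      apply Polynomial.expand_injective (R := F) (show 0 < n by omega)
      apply Polynomial.eq_of_infinite_eval_eq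
      apply Set.Infinite.mono (s := {x | x ≠ 0})
      · intro s hs
        simp only [Set.mem_ofPred_eq, Polynomial.expand_eval, Polynomial.eval_pow, Polynomial.eval_X, hp]
        rw [← map_smul, ← map_add]
        exact step1 _ s hs (hdet _)
      · exact (Set.finite_singleton (0:F)).infinite_compl
    have := congrArg (Polynomial.eval X.det) hq
    simp only [Polynomial.eval_pow, Polynomial.eval_X, hp] at this
    rw [← map_smul, ← map_add, hAB, mul_inv_cancel₀ hX] at this
    have h1 : Function.update (1 : Fin n → F) z 1 = 1 := by simp
    rw [h1] at this
    simpa using this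
  obtain ⟨p, hp⟩ := det_line (T X) (T 1)
  obtain ⟨r, hr⟩ := det_line X 1
  have hr0 : r ≠ 0 := by
    intro h0
    have hch : X.charpoly = 0 ∨ True := Or.inr trivial
    have : ∀ t : F, (-X).charpoly.eval t = 0 := by
      intro t
      rw [Matrix.eval_charpoly, sub_neg_eq_add, add_comm]
      have := hr t
      rw [h0, Polynomial.eval_zero] at this
      rw [this]
      congr 2
      ext i j
      simp [Matrix.scalar_apply, Matrix.smul_apply, diagonal_apply, Matrix.one_apply]
    exact (Matrix.charpoly_monic (-X)).ne_zero (Polynomial.funext (by simpa using this))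
  have hq : p ^ 2 = r ^ 2 := by
    apply Polynomial.eq_of_infinite_eval_eq
    apply Set.Infinite.mono (s := {x | ¬ r.IsRoot x})
    · intro s hs
      simp only [Set.mem_ofPred_eq, Polynomial.eval_pow, hp, hr]
      rw [← map_smul, ← map_add]
      apply step2
      rw [← hr]; exact hs
    · exact (Polynomial.finite_setOfPred_isRoot hr0).infinite_compl
  have := congrArg (Polynomial.eval 0) hq
  simpa [hp, hr] using this

theorem det_back {F : Type*} [Field F] {n : ℕ} (hn : 2 ≤ n)
    (T : Matrix (Fin n) (Fin n) F →ₗ[F] Matrix (Fin n) (Fin n) F)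
    (hT : Function.Bijective T)
    (h : ∀ X, X.det ^ 2 = 1 → (T X).det ^ 2 = 1) (X : Matrix (Fin n) (Fin n) F) :
    (T X).det ^ 2 = 1 ↔ X.det ^ 2 = 1 := by
  refine ⟨fun hX => ?_, h X⟩
  cases finite_or_infinite F with
  | inr _ => rw [← det_sq_eq hn T h]; exact hX
  | inl _ =>
    let S := {X : Matrix (Fin n) (Fin n) F // X.det ^ 2 = 1}
    let f : S → S := fun X => ⟨T X.1, h _ X.2⟩
    have hf : Function.Injective f := by
      intro a b hab
      have := congrArg Subtype.val hab
      exact Subtype.ext (hT.1 this)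
    have hs := Finite.injective_iff_surjective.1 hf
    obtain ⟨Y, hY⟩ := hs ⟨T X, hX⟩
    have := congrArg Subtype.val hY
    have := hT.1 this
    rw [← this]; exact Y.2

theorem exists_charpoly {F : Type*} [Field F] {ι : Type*} [Fintype ι] [DecidableEq ι]
    (m : Polynomial F) (hm : m.Monic) (hd : m.natDegree = Fintype.card ι) :
    ∃ C : Matrix ι ι F, ∀ t : F, (C + t • (1 : Matrix ι ι F)).det = m.eval t := by
  have hm0 : m ≠ 0 := hm.ne_zero
  let pb := AdjoinRoot.powerBasis hm0
  have hdim : Fintype.card (Fin pb.dim) = Fintype.card ι := by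
    rw [Fintype.card_fin, AdjoinRoot.powerBasis_dim, hd]
  let e : Fin pb.dim ≃ ι := Fintype.equivOfCardEq hdim
  have hcp : (Algebra.leftMulMatrix pb.basis pb.gen).charpoly = m := by
    rw [charpoly_leftMulMatrix]
    rw [AdjoinRoot.minpoly_powerBasis_gen hm0, hm.leadingCoeff]
    simp
  refine ⟨-(Matrix.reindex e e (Algebra.leftMulMatrix pb.basis pb.gen)), fun t => ?_⟩
  conv_rhs => rw [← hcp, ← Matrix.charpoly_reindex e, Matrix.eval_charpoly]
  congr 1
  rw [sub_eq_add_neg, add_comm]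
  congr 1
  ext i j
  simp [Matrix.scalar_apply, diagonal_apply, Matrix.one_apply]

theorem exists_pencil {F : Type*} [Field F] [DecidableEq F] {n : ℕ} (d : Fin n → F)
    (m : Polynomial F) (hm : m.Monic) (hd : m.natDegree = Fintype.card {i // d i ≠ 0}) :
    ∃ X : Matrix (Fin n) (Fin n) F, ∀ t : F,
      (X + t • diagonal d).det = (∏ i : {i // d i ≠ 0}, d i) * m.eval t := by
  obtain ⟨C, hC⟩ := exists_charpoly m hm hd
  let e := Equiv.sumCompl (fun i : Fin n => d i ≠ 0)
  refine ⟨Matrix.reindex e e (fromBlocks (diagonal (fun i : {i // d i ≠ 0} => d i) * C) 0 0 1),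
    fun t => ?_⟩
  have h1 : diagonal d = Matrix.reindex e e
      (fromBlocks (diagonal (fun i : {i // d i ≠ 0} => d i)) 0 0 0) := by
    rw [← Equiv.symm_apply_eq]
    ext i j
    rcases i with i | i <;> rcases j with j | j <;>
      simp [e, diagonal_apply, Subtype.ext_iff]
    · intro h
      have := i.2; rw [h] at this; exact absurd this j.2
    · intro h
      exact not_not.1 i.2
    · intro h
      exact not_not.1 i.2
  have h2 : Matrix.reindex e e
        (fromBlocks (diagonal (fun i : {i // d i ≠ 0} => d i) * C) 0 0 1) + t • diagonal d
      = Matrix.reindex e e (fromBlocks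
        (diagonal (fun i : {i // d i ≠ 0} => d i) * (C + t • (1 : Matrix _ _ F))) 0 0 1) := by
    rw [h1, Matrix.mul_add, Matrix.mul_smul, Matrix.mul_one]
    ext i j
    obtain ⟨i, rfl⟩ := e.surjective i
    obtain ⟨j, rfl⟩ := e.surjective j
    rcases i with i | i <;> rcases j with j | j <;> simp
  rw [h2, Matrix.det_reindex_self, Matrix.det_fromBlocks_zero₂₁, det_mul, hC, det_diagonal]
  simp

/-- The pencil property used to detect matrices of rank at most one. -/
def PencilProp {F : Type*} [Field F] {n : ℕ} (N : Matrix (Fin n) (Fin n) F) : Prop :=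
  ∀ X : Matrix (Fin n) (Fin n) F, X.det ^ 2 = 1 →
    (∀ t : F, (X + t • N).det ^ 2 = 1) ∨
    ∃ t0 : F, t0 ≠ 0 ∧ ∀ t : F, ((X + t • N).det ^ 2 = 1 ↔ t = 0 ∨ t = t0)

theorem pencil_of_vecMulVec {F : Type*} [Field F] (h2 : (2 : F) ≠ 0) {n : ℕ} (u v : Fin n → F) :
    PencilProp (vecMulVec u v) := by
  intro X hX
  have hu : IsUnit X.det := by
    rw [isUnit_iff_ne_zero]; intro h; rw [h] at hX; simp at hX
  have key : ∀ t : F, (X + t • vecMulVec u v).det = X.det * (1 + t * (v ⬝ᵥ (X⁻¹ *ᵥ u))) := by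
    intro t
    rw [← smul_vecMulVec, vecMulVec_eq Unit, Matrix.det_add_replicateCol_mul_replicateRow hu]
    congr 1
    simp [← replicateCol_mulVec, det_unique]
    left
    rw [← mulVec_mulVec]
    rfl
  by_cases hτ : v ⬝ᵥ (X⁻¹ *ᵥ u) = 0
  · left
    intro t
    rw [key, hτ]; simpa using hX
  · right
    refine ⟨-2 / (v ⬝ᵥ (X⁻¹ *ᵥ u)), by simp [h2, hτ], fun t => ?_⟩
    rw [key, mul_pow, hX, one_mul, sq_eq_one_iff, eq_div_iff hτ]
    constructor
    · rintro (h | h)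
      · left
        have : t * (v ⬝ᵥ (X⁻¹ *ᵥ u)) = 0 := by linear_combination h
        simpa [hτ] using this
      · right
        linear_combination h
    · rintro (h | h)
      · left; simp [h]
      · right; linear_combination h

theorem not_pencil_diag {F : Type*} [Field F] [DecidableEq F] (h2 : (2 : F) ≠ 0) {n : ℕ} (d : Fin n → F)
    (hr : 2 ≤ Fintype.card {i // d i ≠ 0}) : ¬ PencilProp (diagonal d) := by
  intro hP
  set r := Fintype.card {i // d i ≠ 0} with hrdef
  set δ := ∏ i : {i // d i ≠ 0}, d i with hδ
  have hδ0 : δ ≠ 0 := Finset.prod_ne_zero_iff.2 fun i _ => i.2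
  have h4 : (4 : F) ≠ 0 := by
    have : (4 : F) = 2 * 2 := by norm_num
    rw [this]; exact mul_ne_zero h2 h2
  have red : ∀ m : Polynomial F, m.Monic → m.natDegree = r → (δ * m.eval 0) ^ 2 = 1 →
      (∀ t : F, (δ * m.eval t) ^ 2 = 1) ∨
      ∃ t0 : F, t0 ≠ 0 ∧ ∀ t : F, ((δ * m.eval t) ^ 2 = 1 ↔ t = 0 ∨ t = t0) := by
    intro m hm hd h0
    obtain ⟨X, hX⟩ := exists_pencil d m hm hd
    have := hP X (by have := hX 0; rw [zero_smul, add_zero] at this; rw [this]; exact h0)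
    simpa only [hX] using this
  have sgn : ∀ w : F, w ≠ 0 → ∃ ε : F, ε ^ 2 = 1 ∧ (w + ε) ^ 2 ≠ 1 := by
    intro w hw
    by_cases h : (w + 1) ^ 2 = 1
    · refine ⟨-1, by ring, fun h' => ?_⟩
      have h3 : 4 * w = 0 := by linear_combination h - h'
      simp [h4, hw] at h3
    · exact ⟨1, by ring, h⟩
  have neg1 : (-1 : F) ≠ 1 := by
    intro h; apply h2; linear_combination -h
  by_cases hr2 : r = 2
  · obtain ⟨ε, hε, hε'⟩ := sgn δ hδ0
    have hev : ∀ t : F, δ * (Polynomial.X ^ r + Polynomial.C (δ⁻¹ * ε) : Polynomial F).eval t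
        = δ * t ^ 2 + ε := by
      intro t; simp [hr2]; field_simp
    have := red _ (Polynomial.monic_X_pow_add_C _ (by omega)) (Polynomial.natDegree_X_pow_add_C)
      (by rw [hev]; simpa using hε)
    simp only [hev] at this
    rcases this with h | ⟨t0, ht0, h⟩
    · apply hε'
      have := h 1
      simpa using this
    · have h1 := (h t0).2 (Or.inr rfl)
      have h3 := (h (-t0)).1 (by rw [neg_sq]; exact h1)
      rcases h3 with h3 | h3
      · exact ht0 (neg_eq_zero.1 h3)
      · have : 2 * t0 = 0 := by linear_combination -h3
        simp [h2, ht0] at this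
  · obtain ⟨k, hk⟩ : ∃ k, r = k + 3 := ⟨r - 3, by omega⟩
    by_cases hF : ∃ b : F, b ≠ 0 ∧ b ^ 2 ≠ 1
    · obtain ⟨b, hb, hb1⟩ := hF
      obtain ⟨ε, hε, hε'⟩ := sgn (δ * (b ^ (k+1) * (b ^ 2 - 1)))
        (mul_ne_zero hδ0 (mul_ne_zero (pow_ne_zero _ hb) (sub_ne_zero.2 hb1)))
      let p : Polynomial F := - Polynomial.X ^ (k+1) + Polynomial.C (δ⁻¹ * ε)
      have hp : p.degree < ((k + 3 : ℕ) : WithBot ℕ) := by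
        apply lt_of_le_of_lt (b := ((k + 1 : ℕ) : WithBot ℕ))
        · simp only [p]; compute_degree; simp; exact ⟨le_rfl, by exact_mod_cast Nat.zero_le (k + 1)⟩
        · exact_mod_cast (by omega)
      have hev : ∀ t : F, δ * (Polynomial.X ^ (k+3) + p).eval t
          = δ * (t ^ (k+1) * (t ^ 2 - 1)) + ε := by
        intro t; simp [p]; field_simp; ring
      have hmon : (Polynomial.X ^ (k+3) + p).Monic := Polynomial.monic_X_pow_add hp
      have hdeg : (Polynomial.X ^ (k+3) + p).natDegree = r := by
        rw [hk, Polynomial.natDegree_add_eq_left_of_degree_lt, Polynomial.natDegree_X_pow]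
        simpa using hp
      have := red _ hmon hdeg (by rw [hev]; simpa using hε)
      simp only [hev] at this
      rcases this with h | ⟨t0, ht0, h⟩
      · exact hε' (h b)
      · have h1 := (h 1).1 (by simpa using hε)
        have h3 := (h (-1)).1 (by simpa using hε)
        have h1' : (1 : F) = t0 := by simpa using h1
        have h3' : (-1 : F) = t0 := by simpa using h3
        exact neg1 (h3'.trans h1'.symm)
    · push Not at hF
      let m : Polynomial F := (Polynomial.X ^ 2 - Polynomial.C 1) *
        (Polynomial.X ^ (k+1) - Polynomial.C δ⁻¹)
      have hm1 : (Polynomial.X ^ 2 - Polynomial.C 1 : Polynomial F).Monic :=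
        Polynomial.monic_X_pow_sub_C _ (by norm_num)
      have hm2 : (Polynomial.X ^ (k+1) - Polynomial.C δ⁻¹ : Polynomial F).Monic :=
        Polynomial.monic_X_pow_sub_C _ (by omega)
      have hdeg : m.natDegree = r := by
        simp only [m]
        rw [hm1.natDegree_mul hm2, Polynomial.natDegree_X_pow_sub_C,
          Polynomial.natDegree_X_pow_sub_C, hk]; omega
      have h0 : δ * m.eval 0 = 1 := by simp [m, hδ0]
      have hne : ∀ t : F, t ≠ 0 → m.eval t = 0 := by
        intro t ht
        simp [m, hF t ht]
      rcases red m (hm1.mul hm2) hdeg (by rw [h0]; ring) with h | ⟨t0, ht0, h⟩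
      · have := h 1
        rw [hne 1 one_ne_zero] at this; simp at this
      · have := (h t0).2 (Or.inr rfl)
        rw [hne t0 ht0] at this; simp at this

theorem vecMulVec_of_pencil {F : Type*} [Field F] (h2 : (2 : F) ≠ 0) {n : ℕ}
    (N : Matrix (Fin n) (Fin n) F) (hN : PencilProp N) : ∃ u v, N = vecMulVec u v := by
  classical
  obtain ⟨L, L', d, hd⟩ := Matrix.Pivot.exists_list_transvec_mul_diagonal_mul_list_transvec N
  set A := (L.map TransvectionStruct.toMatrix).prod with hA
  set B := (L'.map TransvectionStruct.toMatrix).prod with hB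
  have dA : A.det = 1 := TransvectionStruct.det_toMatrix_prod L
  have dB : B.det = 1 := TransvectionStruct.det_toMatrix_prod L'
  by_cases hr : 2 ≤ Fintype.card {i // d i ≠ 0}
  · exfalso
    apply not_pencil_diag h2 d hr
    intro X hX
    have := hN (A * X * B) (by simpa [det_mul, dA, dB] using hX)
    have e : ∀ t : F, (A * X * B + t • N).det = (X + t • diagonal d).det := by
      intro t
      have : A * X * B + t • N = A * (X + t • diagonal d) * B := by
        rw [hd]; simp [Matrix.mul_add, Matrix.add_mul]
      rw [this, det_mul, det_mul, dA, dB]; simp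
    simpa only [e] using this
  · have hs : Fintype.card {i // d i ≠ 0} ≤ 1 := by omega
    rw [Fintype.card_le_one_iff] at hs
    obtain ⟨u, v, huv⟩ : ∃ u v, diagonal d = vecMulVec u v := by
      by_cases hz : ∃ i, d i ≠ 0
      · obtain ⟨i, hi⟩ := hz
        refine ⟨Pi.single i (d i), Pi.single i 1, ?_⟩
        have hj : ∀ j, j ≠ i → d j = 0 := by
          intro j hji
          by_contra hdj
          exact hji (congrArg Subtype.val (hs ⟨j, hdj⟩ ⟨i, hi⟩))
        ext a b
        simp only [diagonal_apply, vecMulVec_apply, Pi.single_apply]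
        by_cases ha : a = i <;> by_cases hb : b = i
        · subst ha; subst hb; simp
        · subst ha; simp [hb, Ne.symm hb]
        · simp [ha, hj a ha]
        · simp [ha, hj a ha]
      · push Not at hz
        refine ⟨0, 0, ?_⟩
        ext a b
        simp [diagonal_apply, hz]
    refine ⟨A *ᵥ u, v ᵥ* B, ?_⟩
    rw [hd, huv, mul_vecMulVec, vecMulVec_mul]

theorem rank_one_iff {F : Type*} [Field F] (h2 : (2 : F) ≠ 0) {n : ℕ}
    (T : Matrix (Fin n) (Fin n) F →ₗ[F] Matrix (Fin n) (Fin n) F)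
    (hT : Function.Bijective T)
    (h : ∀ X, (T X).det ^ 2 = 1 ↔ X.det ^ 2 = 1) (N : Matrix (Fin n) (Fin n) F) :
    (∃ u v, T N = vecMulVec u v) ↔ ∃ u v, N = vecMulVec u v := by
  have hp : PencilProp (T N) ↔ PencilProp N := by
    constructor
    · intro hP X hX
      have := hP (T X) ((h X).2 hX)
      simpa only [← map_smul, ← map_add, h] using this
    · intro hP Y hY
      obtain ⟨X, rfl⟩ := hT.2 Y
      have := hP X ((h X).1 hY)
      simpa only [← map_smul, ← map_add, h] using this
  constructor
  · rintro ⟨u, v, huv⟩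
    exact vecMulVec_of_pencil h2 _ (hp.1 (huv ▸ pencil_of_vecMulVec h2 u v))
  · rintro ⟨u, v, huv⟩
    exact vecMulVec_of_pencil h2 _ (hp.2 (huv ▸ pencil_of_vecMulVec h2 u v))

/-- Two vectors are parallel (all two by two minors vanish). -/
def Par {F : Type*} [Field F] {n : ℕ} (a c : Fin n → F) : Prop := ∀ i j, a i * c j = a j * c i

theorem Par.symm' {F : Type*} [Field F] {n : ℕ} {a c : Fin n → F} (h : Par a c) : Par c a :=
  fun i j => by linear_combination -(h i j)

theorem Par.exists_smul {F : Type*} [Field F] {n : ℕ} {a c : Fin n → F} (h : Par a c)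
    (ha : a ≠ 0) : ∃ l : F, c = l • a := by
  obtain ⟨i, hi⟩ := Function.ne_iff.1 ha
  have hi' : a i ≠ 0 := hi
  refine ⟨c i / a i, ?_⟩
  ext j
  simp only [Pi.smul_apply, smul_eq_mul]
  field_simp
  linear_combination h i j

theorem Par.trans' {F : Type*} [Field F] {n : ℕ} {a b c : Fin n → F} (h : Par a b)
    (h' : Par b c) (hb : b ≠ 0) : Par a c := by
  obtain ⟨l, rfl⟩ := h.symm'.exists_smul hb
  obtain ⟨m, rfl⟩ := h'.exists_smul hb
  intro i j
  simp; ring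

theorem par_of_rank_one {F : Type*} [Field F] {n : ℕ} {a b c d : Fin n → F}
    (h : ∃ u v, vecMulVec a b + vecMulVec c d = vecMulVec u v) : Par a c ∨ Par b d := by
  obtain ⟨u, v, h⟩ := h
  have e : ∀ i j, a i * b j + c i * d j = u i * v j := by
    intro i j
    have := congrFun (congrFun h i) j
    simpa [vecMulVec_apply] using this
  by_contra hc
  push Not at hc
  obtain ⟨h1, h2⟩ := hc
  unfold Par at h1 h2
  push Not at h1 h2
  obtain ⟨i, j, hij⟩ := h1
  obtain ⟨k, l, hkl⟩ := h2
  have : (a i * c j - a j * c i) * (b k * d l - b l * d k) = 0 := by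
    have : (a i * c j - a j * c i) * (b k * d l - b l * d k)
      = (a i * b k + c i * d k) * (a j * b l + c j * d l)
        - (a i * b l + c i * d l) * (a j * b k + c j * d k) := by ring
    rw [this, e, e, e, e]; ring
  rcases mul_eq_zero.1 this with h | h
  · exact hij (sub_eq_zero.1 h)
  · exact hkl (sub_eq_zero.1 h)

theorem rank_one_of_par {F : Type*} [Field F] {n : ℕ} {a b c d : Fin n → F}
    (ha : a ≠ 0) (hb : b ≠ 0) (h : Par a c ∨ Par b d) :
    ∃ u v, vecMulVec a b + vecMulVec c d = vecMulVec u v := by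
  rcases h with h | h
  · obtain ⟨l, rfl⟩ := h.exists_smul ha
    refine ⟨a, b + l • d, ?_⟩
    ext i j; simp [vecMulVec_apply]; ring
  · obtain ⟨l, rfl⟩ := h.exists_smul hb
    refine ⟨a + l • c, b, ?_⟩
    ext i j; simp [vecMulVec_apply]; ring

theorem par_single {F : Type*} [Field F] {n : ℕ} {i k : Fin n}
    (h : Par (Pi.single i (1:F)) (Pi.single k 1)) : i = k := by
  by_contra hik
  have := h i k
  simp [Ne.symm hik, hik] at this

theorem single_vec {F : Type*} [Field F] {n : ℕ} (i j : Fin n) :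
    Matrix.single i j (1:F) = vecMulVec (Pi.single i 1) (Pi.single j 1) := by
  ext a b
  simp [Matrix.single_apply, vecMulVec_apply, Pi.single_apply]
  grind

theorem standard_form {F : Type*} [Field F] {n : ℕ} (hn : 2 ≤ n)
    (T : Matrix (Fin n) (Fin n) F →ₗ[F] Matrix (Fin n) (Fin n) F)
    (hT : Function.Injective T)
    (h : ∀ N, (∃ u v, T N = vecMulVec u v) ↔ ∃ u v, N = vecMulVec u v)
    (a b : Fin n → Fin n → Fin n → F)
    (hab : ∀ i j, T (Matrix.single i j 1) = vecMulVec (a i j) (b i j))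
    (z o : Fin n) (hzo : z ≠ o) (hpar : Par (a z z) (a z o)) :
    ∃ P Q : Matrix (Fin n) (Fin n) F, ∀ X, T X = P * X * Q := by
  have hne : ∀ i j, vecMulVec (a i j) (b i j) ≠ 0 := by
    intro i j h0
    rw [← hab, ← map_zero T] at h0
    have := congrFun (congrFun (hT h0) i) j
    simp at this
  have ha : ∀ i j, a i j ≠ 0 := fun i j h0 => hne i j (by rw [h0]; ext; simp [vecMulVec_apply])
  have hb : ∀ i j, b i j ≠ 0 := fun i j h0 => hne i j (by rw [h0]; ext; simp [vecMulVec_apply])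
  have hsum : ∀ i j k l, (Par (a i j) (a k l) ∨ Par (b i j) (b k l)) ↔ (i = k ∨ j = l) := by
    intro i j k l
    have hs : ∀ i : Fin n, (Pi.single i 1 : Fin n → F) ≠ 0 := by
      intro i h0
      have := congrFun h0 i
      simp at this
    have key := h (Matrix.single i j 1 + Matrix.single k l 1)
    rw [map_add, hab, hab, single_vec, single_vec] at key
    constructor
    · intro hp
      rcases par_of_rank_one (key.1 (rank_one_of_par (ha i j) (hb i j) hp)) with h1 | h1
      · exact Or.inl (par_single h1)
      · exact Or.inr (par_single h1)
    · intro hp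
      apply par_of_rank_one (key.2 (rank_one_of_par (hs _) (hs _) ?_))
      rcases hp with rfl | rfl
      · left; intro x y; ring
      · right; intro x y; ring
  have hboth : ∀ i j k l, Par (a i j) (a k l) → Par (b i j) (b k l) → i = k ∧ j = l := by
    intro i j k l h1 h2
    obtain ⟨p, hp⟩ := h1.exists_smul (ha i j)
    obtain ⟨q, hq⟩ := h2.exists_smul (hb i j)
    have : T (Matrix.single k l 1) = T ((p * q) • Matrix.single i j 1) := by
      rw [map_smul, hab, hab, hp, hq]
      ext x y; simp [vecMulVec_apply]; ring
    have := congrFun (congrFun (hT this) k) l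
    by_contra hc
    simp [Matrix.single_apply, hc] at this
  have P1 : ∀ i j k l, j ≠ k → l ≠ i → Par (a i j) (a i k) → Par (b i j) (b l j) := by
    intro i j k l hjk hli hp
    rcases (hsum i j l j).2 (Or.inr rfl) with h1 | h1
    · have := (hsum l j i k).1 (Or.inl (h1.symm'.trans' hp (ha i j)))
      tauto
    · exact h1
  have P2 : ∀ i j l k, i ≠ l → k ≠ j → Par (b i j) (b l j) → Par (a i j) (a i k) := by
    intro i j l k hil hkj hp
    rcases (hsum i j i k).2 (Or.inl rfl) with h1 | h1
    · exact h1
    · have := (hsum l j i k).1 (Or.inr (hp.symm'.trans' h1 (hb i j)))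
      have h3 : k = j ∨ i = l := by tauto
      tauto
  have B0 : ∀ l, l ≠ z → Par (b z z) (b l z) := fun l hl => P1 z z o l hzo hl hpar
  have A0 : ∀ k, k ≠ z → Par (a z z) (a z k) := fun k hk =>
    P2 z z o k hzo hk (B0 o hzo.symm)
  have B : ∀ j l, Par (b z j) (b l j) := by
    intro j l
    by_cases hl : l = z
    · subst hl; intro x y; ring
    by_cases hj : j = z
    · subst hj; exact B0 l hl
    · exact P1 z j z l hj hl (A0 j hj).symm'
  have A : ∀ i k, Par (a i z) (a i k) := by
    intro i k
    by_cases hk : k = z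
    · subst hk; intro x y; ring
    by_cases hi : i = z
    · subst hi; exact A0 k hk
    · exact P2 i z z k hi hk (B z i).symm'
  have hc : ∀ i j, ∃ c : F, T (Matrix.single i j 1) = c • vecMulVec (a i z) (b z j) := by
    intro i j
    obtain ⟨p, hp⟩ := (A i j).exists_smul (ha i z)
    obtain ⟨q, hq⟩ := (B j i).exists_smul (hb z j)
    refine ⟨p * q, ?_⟩
    rw [hab, hp, hq]
    ext x y; simp [vecMulVec_apply]; ring
  choose c hc using hc
  have hc0 : c z z ≠ 0 := by
    intro h0
    have := hc z z
    rw [h0, zero_smul, hab] at this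
    exact hne z z this
  have hcc : ∀ i j, c z z * c i j = c i z * c z j := by
    intro i j
    by_cases hi : i = z
    · subst hi; ring
    by_cases hj : j = z
    · subst hj; ring
    have hr : ∃ u v, T (vecMulVec (Pi.single z 1 + Pi.single i 1 : Fin n → F)
        (Pi.single z 1 + Pi.single j 1)) = vecMulVec u v := (h _).2 ⟨_, _, rfl⟩
    rw [add_vecMulVec, vecMulVec_add, vecMulVec_add, ← single_vec, ← single_vec, ← single_vec,
      ← single_vec] at hr
    simp only [map_add, hc] at hr
    have e : c z z • vecMulVec (a z z) (b z z) + c z j • vecMulVec (a z z) (b z j) +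
        (c i z • vecMulVec (a i z) (b z z) + c i j • vecMulVec (a i z) (b z j))
        = vecMulVec (a z z) (c z z • b z z + c z j • b z j)
          + vecMulVec (a i z) (c i z • b z z + c i j • b z j) := by
      ext x y; simp [vecMulVec_apply]; ring
    rw [e] at hr
    rcases par_of_rank_one hr with h1 | h1
    · have := hboth _ _ _ _ h1 (B z i)
      exact absurd this.1.symm hi
    · by_contra hcon
      have : Par (b z z) (b z j) := by
        intro x y
        have h2 := h1 x y
        simp only [Pi.add_apply, Pi.smul_apply, smul_eq_mul] at h2
        have : (c z z * c i j - c i z * c z j) * (b z z x * b z j y - b z z y * b z j x) = 0 := by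
          linear_combination h2
        rcases mul_eq_zero.1 this with h3 | h3
        · exact absurd (sub_eq_zero.1 h3) hcon
        · exact sub_eq_zero.1 h3
      have := hboth _ _ _ _ (A0 j hj) this
      exact hj this.2.symm
  refine ⟨Matrix.of fun r i => c i z / c z z * a i z r, Matrix.of fun j s => c z j * b z j s, ?_⟩
  set P : Matrix (Fin n) (Fin n) F := Matrix.of fun r i => c i z / c z z * a i z r with hP
  set Q : Matrix (Fin n) (Fin n) F := Matrix.of fun j s => c z j * b z j s with hQ
  have hE : T = (LinearMap.mulRight F Q).comp (LinearMap.mulLeft F P) := by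
    apply Matrix.ext_linearMap
    intro i j
    ext
    rename_i x y
    simp only [LinearMap.comp_apply, LinearMap.mulRight_apply, LinearMap.mulLeft_apply,
      Matrix.singleLinearMap_apply]
    rw [hc, single_vec, mul_vecMulVec, vecMulVec_mul]
    simp [vecMulVec_apply, hP, hQ]
    have := hcc i j
    field_simp
    linear_combination (a i z x) * (b z j y) * this
  intro X
  rw [hE]; rfl

theorem stmt2 (F : Type*) [Field F] (hchar : ringChar F ≠ 2) (n : ℕ) (hn : 2 ≤ n)
    (T : Matrix (Fin n) (Fin n) F →ₗ[F] Matrix (Fin n) (Fin n) F)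
    (hT : Function.Bijective T) :
    (∀ A ∈ ProdInv4 F n, T A ∈ ProdInv4 F n) ↔
      ∃ P Q : Matrix (Fin n) (Fin n) F, IsUnit P ∧ IsUnit Q ∧
        ((P * Q).det = 1 ∨ (P * Q).det = -1) ∧
        ((∀ X, T X = P * X * Q) ∨ (∀ X, T X = P * Xᵀ * Q)) := by
  have h2 : (2 : F) ≠ 0 := Ring.two_ne_zero hchar
  simp only [mem_prodInv4_iff h2, ← sq_eq_one_iff]
  constructor
  · intro h
    have hback := det_back hn T hT h
    have hrk := rank_one_iff h2 T hT hback
    have hE : ∀ i j, ∃ u v, T (Matrix.single i j 1) = vecMulVec u v := fun i j =>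
      (hrk _).2 ⟨_, _, single_vec i j⟩
    choose a b hab using hE
    let z : Fin n := ⟨0, by omega⟩
    let o : Fin n := ⟨1, by omega⟩
    have hzo : z ≠ o := by simp [z, o]
    have hT1 : (T 1).det ^ 2 = 1 := h 1 (by simp)
    have fin : ∀ P Q : Matrix (Fin n) (Fin n) F, (P * Q).det ^ 2 = 1 → IsUnit P ∧ IsUnit Q := by
      intro P Q hPQ
      rw [det_mul] at hPQ
      constructor <;> rw [Matrix.isUnit_iff_isUnit_det, isUnit_iff_ne_zero] <;> intro h0 <;>
        rw [h0] at hPQ <;> simp at hPQ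
    have hp : Par (a z z) (a z o) ∨ Par (b z z) (b z o) := by
      apply par_of_rank_one
      rw [← hab, ← hab, ← map_add]
      refine (hrk _).2 ⟨Pi.single z 1, Pi.single z 1 + Pi.single o 1, ?_⟩
      rw [vecMulVec_add, single_vec, single_vec]
    rcases hp with hp | hp
    · obtain ⟨P, Q, hPQ⟩ := standard_form hn T hT.1 hrk a b hab z o hzo hp
      have hd : (P * Q).det ^ 2 = 1 := by
        rw [hPQ, mul_one] at hT1; exact hT1
      exact ⟨P, Q, (fin P Q hd).1, (fin P Q hd).2, hd, Or.inl hPQ⟩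
    · let T' : Matrix (Fin n) (Fin n) F →ₗ[F] Matrix (Fin n) (Fin n) F :=
        (Matrix.transposeLinearEquiv (Fin n) (Fin n) F F).toLinearMap.comp T
      have hT' : ∀ X, T' X = (T X)ᵀ := fun X => rfl
      obtain ⟨P, Q, hPQ⟩ := standard_form hn T'
        (fun x y hxy => hT.1 (Matrix.transpose_injective (by rw [← hT', ← hT']; exact hxy)))
        (fun N => by
          rw [← hrk N, hT']
          constructor
          · rintro ⟨u, v, huv⟩
            exact ⟨v, u, by rw [← transpose_transpose (T N), huv, transpose_vecMulVec]⟩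
          · rintro ⟨u, v, huv⟩
            exact ⟨v, u, by rw [huv, transpose_vecMulVec]⟩)
        b a (fun i j => by rw [hT', hab, transpose_vecMulVec]) z o hzo hp
      have hTX : ∀ X, T X = Qᵀ * Xᵀ * Pᵀ := by
        intro X
        rw [← transpose_transpose (T X), ← hT', hPQ, transpose_mul, transpose_mul,
          Matrix.mul_assoc]
      have hd : (Qᵀ * Pᵀ).det ^ 2 = 1 := by
        rw [hTX, transpose_one, mul_one] at hT1; exact hT1
      exact ⟨Qᵀ, Pᵀ, (fin _ _ hd).1, (fin _ _ hd).2, hd, Or.inr hTX⟩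
  · rintro ⟨P, Q, -, -, hd, hX | hX⟩ A hA
    · rw [hX, det_mul, det_mul]
      rw [det_mul] at hd
      linear_combination (P.det * Q.det) ^ 2 * hA + hd
    · rw [hX, det_mul, det_mul, det_transpose]
      rw [det_mul] at hd
      linear_combination (P.det * Q.det) ^ 2 * hA + hd
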